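/- Let h = (h_{ijk}) be a fully symmetric real 3-tensor with indices in {1, …, 2n}. Then Q̃(h) := Σ_{i,j,k} h_{ijk}² − 2 Σ_k Σ_{i odd} (h_{iik} h_{i'i'k} − h_{ii'k}²) + 4 Σ_k Σ_{i odd < j odd} (h_{i'jk} h_{j'ik} − h_{ijk} h_{j'i'k}) satisfies Q̃(h) ≥ (3 − √5) ‖h‖², where ‖h‖² = Σ_i h_{iii}² + Σ_{i ≠ j} h_{ijj}² + Σ_{i < j < k} h_{ijk}². (Q̃(h) equals the quadratic form Q(λ, h) from the evolution of *Ω evaluated at λ_1 = ⋯ = λ_{2n} = 1.) -/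

import Mathlib

open Finset

/-- The involution `i ↦ i'` on `Fin (2n)` (0-indexed: `i' = i+1` for even `i`,
`i' = i−1` for odd `i`; this matches the paper's 1-indexed convention where `i'`
is the partner of `i` in the pair `{2k−1, 2k}`). -/
def pr (n : ℕ) (i : Fin (2 * n)) : Fin (2 * n) :=
  if _h : (i : ℕ) % 2 = 0 then ⟨(i : ℕ) + 1, by have := i.isLt; omega⟩
  else ⟨(i : ℕ) - 1, by have := i.isLt; omega⟩

/-!
Let `J` be the complex structure exchanging the two members of each pair `{i, i'}` (with a sign).
The form is `Q̃(h) = ‖h‖²_full − ⟨h, A h⟩`, where `‖h‖²_full = Σ h_{ijk}²` and `A` applies `J` to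
the first two slots of `h`.  By symmetry of `h`, `A` may be replaced by the mean of `A`, `B`, `C`,
where `B` and `C` apply `J` to the other two pairs of slots.  These are commuting involutions with
`A * B * C = -1`, so `(1 - A - B - C)² = 4 (1 - A - B - C)` and hence
`Q̃(h) ≥ (2/3) ‖h‖²_full`, block by block, a block being a triple `(p, q, r)` of pairs
(`block_offdiag`).

An upper bound for the norm of the theorem is `(2/3) Σ h_{iii}² + (1/3) ‖h‖²_full`
(`norm_upper_bound`).  Off the diagonal blocks `(p, p, p)` only the second term matters and
the bound `2/3 ≥ (3 - √5)/3` suffices.  On a diagonal block the form is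
`(x - z)² + 4 z² + (w - y)² + 4 y²`, the sum of two copies of the binary form with matrix
`[[1, -1], [-1, 5]]`, whose least eigenvalue is `3 - √5` (`binary_form_bound`, `block_diag`).
-/

/-- The first (even, 0-indexed) member of the `p`-th pair. -/
def fstIdx {n : ℕ} (p : Fin n) : Fin (2 * n) := ⟨2 * p, by omega⟩

/-- The second (odd, 0-indexed) member of the `p`-th pair. -/
def sndIdx {n : ℕ} (p : Fin n) : Fin (2 * n) := ⟨2 * p + 1, by omega⟩

lemma pr_fstIdx {n : ℕ} (p : Fin n) : pr n (fstIdx p) = sndIdx p := by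
  simp [pr, fstIdx, sndIdx]

lemma sum_filter_even {n : ℕ} (f : Fin (2 * n) → ℝ) :
    ∑ i ∈ univ.filter (fun i : Fin (2 * n) => (i : ℕ) % 2 = 0), f i = ∑ p, f (fstIdx p) := by
  symm
  refine Finset.sum_bij (fun p _ => fstIdx p) ?_ ?_ ?_ ?_
  · intro p _; simp [fstIdx]
  · intro p _ q _ hpq
    simp only [fstIdx, Fin.mk.injEq] at hpq
    exact Fin.ext (by omega)
  · intro i hi
    simp only [mem_filter, mem_univ, true_and] at hi
    exact ⟨⟨i / 2, by omega⟩, mem_univ _, Fin.ext (by simp only [fstIdx]; omega)⟩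
  · intro p _; rfl

lemma sum_filter_odd {n : ℕ} (f : Fin (2 * n) → ℝ) :
    ∑ i ∈ univ.filter (fun i : Fin (2 * n) => ¬ (i : ℕ) % 2 = 0), f i = ∑ p, f (sndIdx p) := by
  symm
  refine Finset.sum_bij (fun p _ => sndIdx p) ?_ ?_ ?_ ?_
  · intro p _; simp [sndIdx]
  · intro p _ q _ hpq
    simp only [sndIdx, Fin.mk.injEq] at hpq
    exact Fin.ext (by omega)
  · intro i hi
    simp only [mem_filter, mem_univ, true_and] at hi
    exact ⟨⟨i / 2, by omega⟩, mem_univ _, Fin.ext (by simp only [sndIdx]; omega)⟩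
  · intro p _; rfl

lemma sum_pairs {n : ℕ} (f : Fin (2 * n) → ℝ) :
    ∑ i, f i = ∑ p : Fin n, (f (fstIdx p) + f (sndIdx p)) := by
  rw [← Finset.sum_filter_add_sum_filter_not univ (fun i : Fin (2 * n) => (i : ℕ) % 2 = 0),
    sum_filter_even, sum_filter_odd, Finset.sum_add_distrib]

lemma sum_filter_even_lt {n : ℕ} (p : Fin n) (f : Fin (2 * n) → ℝ) :
    ∑ j ∈ univ.filter (fun j : Fin (2 * n) => (j : ℕ) % 2 = 0 ∧ fstIdx p < j), f j
      = ∑ q ∈ univ.filter (fun q => p < q), f (fstIdx q) := by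
  rw [← Finset.filter_filter, Finset.sum_filter, sum_filter_even, Finset.sum_filter]
  refine Finset.sum_congr rfl fun q _ => ?_
  have : fstIdx p < fstIdx q ↔ p < q := by
    simp only [fstIdx, Fin.lt_def]; omega
  simp only [this]

lemma sum_symm_eq {n : ℕ} (X : Fin n → Fin n → ℝ) (hX : ∀ p q, X p q = X q p) :
    ∑ p, ∑ q, X p q
      = ∑ p, X p p + 2 * ∑ p, ∑ q ∈ univ.filter (fun q => p < q), X p q := by
  have hdiag : ∑ p, X p p = ∑ p, ∑ q, if p = q then X p q else 0 := by simp
  have hup : ∑ p, ∑ q ∈ univ.filter (fun q => p < q), X p q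
      = ∑ p, ∑ q, if p < q then X p q else 0 := by simp only [Finset.sum_filter]
  have hlow : ∑ p, ∑ q ∈ univ.filter (fun q => p < q), X p q
      = ∑ p, ∑ q, if q < p then X p q else 0 := by
    rw [hup, Finset.sum_comm]
    simp only [fun p q => hX p q]
  rw [two_mul]
  nth_rewrite 1 [hup]
  rw [hlow, hdiag, ← Finset.sum_add_distrib, ← Finset.sum_add_distrib]
  refine Finset.sum_congr rfl fun p _ => ?_
  rw [← Finset.sum_add_distrib, ← Finset.sum_add_distrib]
  refine Finset.sum_congr rfl fun q _ => ?_
  rcases lt_trichotomy p q with hpq | hpq | hpq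
  · simp [hpq, hpq.ne, hpq.le]
  · simp [hpq]
  · simp [hpq, hpq.ne', hpq.le]

lemma sum_cyclic {ι : Type*} [Fintype ι] (f : ι → ι → ι → ℝ) :
    ∑ i, ∑ j, ∑ k, f j k i = ∑ i, ∑ j, ∑ k, f i j k := by
  rw [Finset.sum_comm]
  exact Finset.sum_congr rfl fun i _ => Finset.sum_comm

/-- The multiplicities of `h_{iii}²`, `h_{ijj}²`, `h_{ijk}²` in the full sum are `1`, `3`, `6`,
while the norm counts each once. -/
lemma norm_upper_bound {m : ℕ} (h : Fin m → Fin m → Fin m → ℝ)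
    (hcyc : ∀ i j k, h j k i = h i j k) :
    3 * ((∑ i, h i i i ^ 2)
        + (∑ i, ∑ j ∈ univ.filter (fun j : Fin m => i ≠ j), h i j j ^ 2)
        + (∑ i, ∑ j ∈ univ.filter (fun j : Fin m => i < j),
            ∑ k ∈ univ.filter (fun k : Fin m => j < k), h i j k ^ 2))
      ≤ 2 * (∑ i, h i i i ^ 2) + ∑ i, ∑ j, ∑ k, h i j k ^ 2 := by
  have hD : ∑ i, h i i i ^ 2
      = ∑ i, ∑ j, ∑ k, if i = j ∧ j = k then h i j k ^ 2 else 0 := by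
    simp [ite_and]
  have hE : (∑ i, ∑ j ∈ univ.filter (fun j : Fin m => i ≠ j), h i j j ^ 2)
      = ∑ i, ∑ j, ∑ k, if i ≠ j ∧ j = k then h i j k ^ 2 else 0 := by
    simp [ite_and, Finset.sum_filter]
  have hT : (∑ i, ∑ j ∈ univ.filter (fun j : Fin m => i < j),
            ∑ k ∈ univ.filter (fun k : Fin m => j < k), h i j k ^ 2)
      = ∑ i, ∑ j, ∑ k, if i < j ∧ j < k then h i j k ^ 2 else 0 := by
    simp only [Finset.sum_filter]
    refine Finset.sum_congr rfl fun i _ => Finset.sum_congr rfl fun j _ => ?_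
    by_cases hij : i < j <;> simp [hij]
  set F : Fin m → Fin m → Fin m → ℝ := fun i j k =>
    (if i ≠ j ∧ j = k then h i j k ^ 2 else 0) + (if i < j ∧ j < k then h i j k ^ 2 else 0)
    with hF
  have hET : (∑ i, ∑ j ∈ univ.filter (fun j : Fin m => i ≠ j), h i j j ^ 2)
        + (∑ i, ∑ j ∈ univ.filter (fun j : Fin m => i < j),
            ∑ k ∈ univ.filter (fun k : Fin m => j < k), h i j k ^ 2)
      = ∑ i, ∑ j, ∑ k, F i j k := by
    rw [hE, hT]; simp only [hF, Finset.sum_add_distrib]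
  have h1 := sum_cyclic F
  have h2 := sum_cyclic (fun i j k => F j k i)
  have key : (∑ i, h i i i ^ 2) + (∑ i, ∑ j, ∑ k, F i j k) + (∑ i, ∑ j, ∑ k, F j k i)
      + (∑ i, ∑ j, ∑ k, F k i j) ≤ ∑ i, ∑ j, ∑ k, h i j k ^ 2 := by
    rw [hD]
    simp only [← Finset.sum_add_distrib]
    refine Finset.sum_le_sum fun i _ => Finset.sum_le_sum fun j _ => Finset.sum_le_sum fun k _ => ?_
    simp only [hF]
    rw [hcyc i j k, ← hcyc k i j]
    have := sq_nonneg (h i j k)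
    -- At most one of the seven index conditions holds.
    split_ifs <;> first | (exfalso; omega) | linarith
  linarith

/-- The least eigenvalue of `[[1, -1], [-1, 5]]` is `3 - √5`. -/
lemma binary_form_bound (x z : ℝ) :
    (3 - Real.sqrt 5) * (x ^ 2 + z ^ 2) ≤ (x - z) ^ 2 + 4 * z ^ 2 := by
  have hs : Real.sqrt 5 ^ 2 = 5 := Real.sq_sqrt (by norm_num)
  have h2 : 2 < Real.sqrt 5 := by
    rw [Real.lt_sqrt (by norm_num)]; norm_num
  have : 0 ≤ (Real.sqrt 5 - 2) * (x - (Real.sqrt 5 + 2) * z) ^ 2 := by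
    have := sq_nonneg (x - (Real.sqrt 5 + 2) * z)
    have : 0 ≤ Real.sqrt 5 - 2 := by linarith
    positivity
  have e : (x - z) ^ 2 + 4 * z ^ 2 - (3 - Real.sqrt 5) * (x ^ 2 + z ^ 2)
      = (Real.sqrt 5 - 2) * (x - (Real.sqrt 5 + 2) * z) ^ 2 := by
    linear_combination (2 * x * z - (2 + Real.sqrt 5) * z ^ 2) * hs
  linarith

/-- The term of the form, at pairs `p`, `q` and index `k`, polarizing `h_{ii'k}² - h_{iik} h_{i'i'k}`. -/
def crossTerm {n : ℕ} (h : Fin (2 * n) → Fin (2 * n) → Fin (2 * n) → ℝ)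
    (p q : Fin n) (k : Fin (2 * n)) : ℝ :=
  h (sndIdx p) (fstIdx q) k * h (fstIdx p) (sndIdx q) k
    - h (fstIdx p) (fstIdx q) k * h (sndIdx p) (sndIdx q) k

/-- The sum of `h_{ijk}²` over the block of pairs `(p, q, r)`. -/
def blockSq {n : ℕ} (h : Fin (2 * n) → Fin (2 * n) → Fin (2 * n) → ℝ) (p q r : Fin n) : ℝ :=
  h (fstIdx p) (fstIdx q) (fstIdx r) ^ 2 + h (fstIdx p) (fstIdx q) (sndIdx r) ^ 2
    + (h (fstIdx p) (sndIdx q) (fstIdx r) ^ 2 + h (fstIdx p) (sndIdx q) (sndIdx r) ^ 2)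
    + (h (sndIdx p) (fstIdx q) (fstIdx r) ^ 2 + h (sndIdx p) (fstIdx q) (sndIdx r) ^ 2
    + (h (sndIdx p) (sndIdx q) (fstIdx r) ^ 2 + h (sndIdx p) (sndIdx q) (sndIdx r) ^ 2))

/-- The contribution `-⟨h, A h⟩` of the block `(p, q, r)`, where `A` acts on the slots of `p`
and `q`. -/
def blockCross {n : ℕ} (h : Fin (2 * n) → Fin (2 * n) → Fin (2 * n) → ℝ) (p q r : Fin n) : ℝ :=
  2 * (crossTerm h p q (fstIdx r) + crossTerm h p q (sndIdx r))

lemma sum_sq_eq_blocks {n : ℕ} (h : Fin (2 * n) → Fin (2 * n) → Fin (2 * n) → ℝ) :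
    ∑ i, ∑ j, ∑ k, h i j k ^ 2 = ∑ p, ∑ q, ∑ r, blockSq h p q r := by
  simp only [sum_pairs (n := n), blockSq, Finset.sum_add_distrib]

/-- The two correction sums of the form assemble into a sum over all ordered pairs of pairs. -/
lemma cross_eq_blocks {n : ℕ} (h : Fin (2 * n) → Fin (2 * n) → Fin (2 * n) → ℝ)
    (hsym1 : ∀ i j k, h i j k = h j i k) :
    - 2 * (∑ k, ∑ i ∈ univ.filter (fun i : Fin (2 * n) => (i : ℕ) % 2 = 0),
          (h i i k * h (pr n i) (pr n i) k - h i (pr n i) k ^ 2))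
      + 4 * (∑ k, ∑ i ∈ univ.filter (fun i : Fin (2 * n) => (i : ℕ) % 2 = 0),
          ∑ j ∈ univ.filter (fun j : Fin (2 * n) => (j : ℕ) % 2 = 0 ∧ i < j),
          (h (pr n i) j k * h (pr n j) i k - h i j k * h (pr n j) (pr n i) k))
      = ∑ p, ∑ q, ∑ r, blockCross h p q r := by
  have hk : ∀ k, - 2 * (∑ i ∈ univ.filter (fun i : Fin (2 * n) => (i : ℕ) % 2 = 0),
          (h i i k * h (pr n i) (pr n i) k - h i (pr n i) k ^ 2))
      + 4 * (∑ i ∈ univ.filter (fun i : Fin (2 * n) => (i : ℕ) % 2 = 0),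
          ∑ j ∈ univ.filter (fun j : Fin (2 * n) => (j : ℕ) % 2 = 0 ∧ i < j),
          (h (pr n i) j k * h (pr n j) i k - h i j k * h (pr n j) (pr n i) k))
      = 2 * ∑ p, ∑ q, crossTerm h p q k := by
    intro k
    rw [sum_symm_eq (fun p q => crossTerm h p q k), sum_filter_even, sum_filter_even]
    · simp only [sum_filter_even_lt, pr_fstIdx]
      have : ∑ p : Fin n, (h (fstIdx p) (fstIdx p) k * h (sndIdx p) (sndIdx p) k
          - h (fstIdx p) (sndIdx p) k ^ 2) = - ∑ p, crossTerm h p p k := by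
        rw [← Finset.sum_neg_distrib]
        refine Finset.sum_congr rfl fun p _ => ?_
        simp only [crossTerm]
        rw [hsym1 (sndIdx p) (fstIdx p)]
        ring
      rw [this]
      simp only [crossTerm, fun p q : Fin n => hsym1 (sndIdx q) (fstIdx p) k,
        fun p q : Fin n => hsym1 (sndIdx q) (sndIdx p) k]
      ring
    · intro p q
      simp only [crossTerm]
      rw [hsym1 (fstIdx p) (fstIdx q), hsym1 (sndIdx p) (sndIdx q),
        hsym1 (sndIdx p) (fstIdx q), hsym1 (fstIdx p) (sndIdx q)]
      ring
  have : ∑ p, ∑ q, ∑ r, blockCross h p q r = ∑ k, 2 * ∑ p, ∑ q, crossTerm h p q k := by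
    rw [← sum_cyclic (blockCross h), ← Finset.mul_sum]
    simp only [sum_pairs (n := n), blockCross, Finset.mul_sum, Finset.sum_add_distrib, mul_add]
  rw [this, ← Finset.sum_congr rfl fun k _ => hk k, Finset.sum_add_distrib,
    Finset.mul_sum, Finset.mul_sum]

/-- Positivity of `1 - A - B - C = ¼ (1 - A - B - C)²` on a block.  This operator has rank two
on the eight-dimensional block, hence the two squares.  With `2 * blockSq` added, it bounds three
times the symmetrized form from below by `2 * blockSq`. -/
lemma block_offdiag {n : ℕ} (h : Fin (2 * n) → Fin (2 * n) → Fin (2 * n) → ℝ)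
    (hsym1 : ∀ i j k, h i j k = h j i k) (hsym2 : ∀ i j k, h i j k = h i k j) (p q r : Fin n) :
    0 ≤ blockSq h p q r + blockCross h p q r + blockCross h q r p + blockCross h r p q := by
  have hc : ∀ i j k, h j k i = h i j k := fun i j k => by rw [hsym2 j k i, hsym1 j i k]
  have hr : ∀ i j k, h k i j = h i j k := fun i j k => by rw [hsym1 k i j, hsym2 i k j]
  have e : blockSq h p q r + blockCross h p q r + blockCross h q r p + blockCross h r p q
    = (h (fstIdx p) (fstIdx q) (fstIdx r) - h (sndIdx p) (sndIdx q) (fstIdx r)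
        - h (fstIdx p) (sndIdx q) (sndIdx r) - h (sndIdx p) (fstIdx q) (sndIdx r)) ^ 2
      + (h (sndIdx p) (sndIdx q) (sndIdx r) - h (sndIdx p) (fstIdx q) (fstIdx r)
        - h (fstIdx p) (sndIdx q) (fstIdx r) - h (fstIdx p) (fstIdx q) (sndIdx r)) ^ 2 := by
    simp only [blockSq, blockCross, crossTerm,
      hc (fstIdx p) (fstIdx q) (fstIdx r), hc (fstIdx p) (fstIdx q) (sndIdx r),
      hc (fstIdx p) (sndIdx q) (fstIdx r), hc (fstIdx p) (sndIdx q) (sndIdx r),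
      hc (sndIdx p) (fstIdx q) (fstIdx r), hc (sndIdx p) (fstIdx q) (sndIdx r),
      hc (sndIdx p) (sndIdx q) (fstIdx r), hc (sndIdx p) (sndIdx q) (sndIdx r),
      hr (fstIdx p) (fstIdx q) (fstIdx r), hr (fstIdx p) (fstIdx q) (sndIdx r),
      hr (fstIdx p) (sndIdx q) (fstIdx r), hr (fstIdx p) (sndIdx q) (sndIdx r),
      hr (sndIdx p) (fstIdx q) (fstIdx r), hr (sndIdx p) (fstIdx q) (sndIdx r),
      hr (sndIdx p) (sndIdx q) (fstIdx r), hr (sndIdx p) (sndIdx q) (sndIdx r)]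
    ring
  rw [e]; positivity

lemma block_diag {n : ℕ} (h : Fin (2 * n) → Fin (2 * n) → Fin (2 * n) → ℝ)
    (hsym1 : ∀ i j k, h i j k = h j i k) (hsym2 : ∀ i j k, h i j k = h i k j) (p : Fin n) :
    (3 - Real.sqrt 5) * (2 * (h (fstIdx p) (fstIdx p) (fstIdx p) ^ 2
        + h (sndIdx p) (sndIdx p) (sndIdx p) ^ 2) + blockSq h p p p)
      ≤ 3 * (blockSq h p p p + blockCross h p p p) := by
  have h1 := binary_form_bound (h (fstIdx p) (fstIdx p) (fstIdx p))
    (h (fstIdx p) (sndIdx p) (sndIdx p))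
  have h2 := binary_form_bound (h (sndIdx p) (sndIdx p) (sndIdx p))
    (h (fstIdx p) (fstIdx p) (sndIdx p))
  simp only [blockSq, blockCross, crossTerm]
  rw [hsym1 (sndIdx p) (fstIdx p) (fstIdx p), hsym1 (sndIdx p) (fstIdx p) (sndIdx p),
    hsym2 (sndIdx p) (sndIdx p) (fstIdx p), hsym2 (fstIdx p) (sndIdx p) (fstIdx p),
    hsym1 (sndIdx p) (fstIdx p) (sndIdx p)]
  linarith

/-- For any fully symmetric real 3-tensor `h` with indices in `Fin (2n)`,
the quadratic form
`Q̃(h) = Σ h_{ijk}² − 2 Σ_k Σ_{i odd} (h_{iik} h_{i'i'k} − h_{ii'k}²)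
  + 4 Σ_k Σ_{i odd < j odd} (h_{i'jk} h_{j'ik} − h_{ijk} h_{j'i'k})`
satisfies `Q̃(h) ≥ (3 − √5) ‖h‖²`, where
`‖h‖² = Σ_i h_{iii}² + Σ_{i≠j} h_{ijj}² + Σ_{i<j<k} h_{ijk}²`.
(Here "odd" refers to the paper's 1-based indexing, i.e. `(i : ℕ) % 2 = 0` in our
0-based indexing.) -/
theorem quadratic_form_lower_bound (n : ℕ)
    (h : Fin (2 * n) → Fin (2 * n) → Fin (2 * n) → ℝ)
    (hsym1 : ∀ i j k, h i j k = h j i k)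
    (hsym2 : ∀ i j k, h i j k = h i k j) :
    (∑ i, ∑ j, ∑ k, h i j k ^ 2)
      - 2 * (∑ k, ∑ i ∈ univ.filter (fun i : Fin (2 * n) => (i : ℕ) % 2 = 0),
          (h i i k * h (pr n i) (pr n i) k - h i (pr n i) k ^ 2))
      + 4 * (∑ k, ∑ i ∈ univ.filter (fun i : Fin (2 * n) => (i : ℕ) % 2 = 0),
          ∑ j ∈ univ.filter (fun j : Fin (2 * n) => (j : ℕ) % 2 = 0 ∧ i < j),
          (h (pr n i) j k * h (pr n j) i k - h i j k * h (pr n j) (pr n i) k)) ≥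
    (3 - Real.sqrt 5) *
      ((∑ i, h i i i ^ 2)
        + (∑ i, ∑ j ∈ univ.filter (fun j : Fin (2 * n) => i ≠ j), h i j j ^ 2)
        + (∑ i, ∑ j ∈ univ.filter (fun j : Fin (2 * n) => i < j),
            ∑ k ∈ univ.filter (fun k : Fin (2 * n) => j < k), h i j k ^ 2)) := by
  have hc : ∀ i j k, h j k i = h i j k := fun i j k => by rw [hsym2 j k i, hsym1 j i k]
  have hlow : 0 ≤ 3 - Real.sqrt 5 := by
    have : Real.sqrt 5 ≤ 3 := by rw [Real.sqrt_le_left (by norm_num)]; norm_num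
    linarith
  have hup : 3 - Real.sqrt 5 ≤ 2 := by
    have : 1 ≤ Real.sqrt 5 := by rw [Real.one_le_sqrt]; norm_num
    linarith
  have hnorm := mul_le_mul_of_nonneg_left (norm_upper_bound h hc) hlow
  have hcross := cross_eq_blocks h hsym1
  have hcyc1 := sum_cyclic (blockCross h)
  have hcyc2 := sum_cyclic (fun p q r => blockCross h q r p)
  have hdiag : ∑ i, h i i i ^ 2 = ∑ p : Fin n, ∑ q, ∑ r, if p = q ∧ q = r then
      (h (fstIdx p) (fstIdx p) (fstIdx p) ^ 2 + h (sndIdx p) (sndIdx p) (sndIdx p) ^ 2)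
      else 0 := by
    rw [sum_pairs]; simp [ite_and]
  have key : (3 - Real.sqrt 5) * (2 * (∑ i, h i i i ^ 2) + ∑ i, ∑ j, ∑ k, h i j k ^ 2)
      ≤ 3 * (∑ i, ∑ j, ∑ k, h i j k ^ 2) + ((∑ p, ∑ q, ∑ r, blockCross h p q r)
        + (∑ p, ∑ q, ∑ r, blockCross h q r p) + (∑ p, ∑ q, ∑ r, blockCross h r p q)) := by
    rw [hdiag, sum_sq_eq_blocks]
    simp only [Finset.mul_sum, ← Finset.sum_add_distrib]
    refine Finset.sum_le_sum fun p _ => Finset.sum_le_sum fun q _ => Finset.sum_le_sum fun r _ => ?_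
    by_cases hpqr : p = q ∧ q = r
    · obtain ⟨rfl, rfl⟩ := hpqr
      have := block_diag h hsym1 hsym2 p
      simp only [and_self, if_true]
      linarith
    · have h1 := block_offdiag h hsym1 hsym2 p q r
      have h2 : 0 ≤ blockSq h p q r := by unfold blockSq; positivity
      have h3 := mul_le_mul_of_nonneg_right hup h2
      rw [if_neg hpqr]
      linarith
  linarith
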